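/- The product of transfer matrices reproduces the quantum determinant at the inhomogeneity points: for every b ∈ {1, …, N}, T₁(ζ_b) T₂(ζ_b/p) = det(K) · ∏_{c=1}^{N} (ξ_b q/ξ_c − ξ_c/(q ξ_b)) (ξ_b/(q ξ_c) − q ξ_c/ξ_b) (ξ_b/(q² ξ_c) − q² ξ_c/ξ_b) · Id_H, i.e. this product is the explicit central scalar given by the quantum determinant q-det M(λ) evaluated at λ = ξ_b, times the identity of H. -/

import Mathlib

open Matrix Kronecker BigOperators

/-- Elementary 3×3 matrices `E i j`. -/
noncomputable def Eb (i j : Fin 3) : Matrix (Fin 3) (Fin 3) ℂ :=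
  Matrix.single i j 1

/-- Principal gradation trigonometric R-matrix of `U_q(gl₃^)`, with spectral
parameter `λ = u³` parametrized by the cube root `u`. -/
noncomputable def RpM (q u : ℂ) : Matrix (Fin 3 × Fin 3) (Fin 3 × Fin 3) ℂ :=
  (∑ k : Fin 3, ∑ p : Fin 3,
    if k = p then (u ^ 3 * q - (u ^ 3 * q)⁻¹) • (Eb k k ⊗ₖ Eb k k)
    else (u ^ 3 - (u ^ 3)⁻¹) • (Eb k k ⊗ₖ Eb p p))
  + (q - q⁻¹) • ∑ k : Fin 3, ∑ p : Fin 3,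
      (if k < p then
        u ^ ((3 : ℤ) - 2 * (((p : ℕ) : ℤ) - ((k : ℕ) : ℤ))) • (Eb k p ⊗ₖ Eb p k)
        + u ^ (2 * (((p : ℕ) : ℤ) - ((k : ℕ) : ℤ)) - (3 : ℤ)) • (Eb p k ⊗ₖ Eb k p)
      else 0)

/-- Index type of the quantum space `H = (ℂ³)^{⊗N}`. -/
abbrev HIdx (N : ℕ) := Fin N → Fin 3

/-- `R_{a,b}(u)`: the R-matrix acting on the auxiliary space and the `b`-th
factor of the quantum space, identity elsewhere. -/
noncomputable def Raux (N : ℕ) (q u : ℂ) (b : Fin N) :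
    Matrix (Fin 3 × HIdx N) (Fin 3 × HIdx N) ℂ :=
  Matrix.of fun x y =>
    RpM q u (x.1, x.2 b) (y.1, y.2 b) * (if ∀ c, c ≠ b → x.2 c = y.2 c then 1 else 0)

/-- The twist matrix acting on the auxiliary space, identity on `H`. -/
noncomputable def Kaux (N : ℕ) (K : Matrix (Fin 3) (Fin 3) ℂ) :
    Matrix (Fin 3 × HIdx N) (Fin 3 × HIdx N) ℂ :=
  Matrix.of fun x y => K x.1 y.1 * (if x.2 = y.2 then 1 else 0)

/-- Monodromy matrix `M(u) = K_a R_{a,N}(u/ζ_N) ⋯ R_{a,1}(u/ζ_1)`. -/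
noncomputable def Mon (N : ℕ) (q : ℂ) (ζ : Fin N → ℂ) (K : Matrix (Fin 3) (Fin 3) ℂ)
    (u : ℂ) : Matrix (Fin 3 × HIdx N) (Fin 3 × HIdx N) ℂ :=
  Kaux N K * (((List.finRange N).reverse.map fun b => Raux N q (u / ζ b) b).prod)

/-- Transfer matrix `T₁(u) = tr_a M(u)`. -/
noncomputable def T1 (N : ℕ) (q : ℂ) (ζ : Fin N → ℂ) (K : Matrix (Fin 3) (Fin 3) ℂ)
    (u : ℂ) : Matrix (HIdx N) (HIdx N) ℂ :=
  Matrix.of fun f g => ∑ i : Fin 3, Mon N q ζ K u (i, f) (i, g)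

/-- The q-antisymmetric projector `P⁻ = R_q(p⁻¹)/(2(q⁻¹ − q))`. -/
noncomputable def Pm (q p : ℂ) : Matrix (Fin 3 × Fin 3) (Fin 3 × Fin 3) ℂ :=
  (2 * (q⁻¹ - q))⁻¹ • RpM q p⁻¹

/-- Embedding of an operator on (auxiliary space a) ⊗ H into
(aux a) ⊗ (aux b) ⊗ H, identity on aux b. -/
noncomputable def embA (N : ℕ) (M : Matrix (Fin 3 × HIdx N) (Fin 3 × HIdx N) ℂ) :
    Matrix (Fin 3 × Fin 3 × HIdx N) (Fin 3 × Fin 3 × HIdx N) ℂ :=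
  Matrix.of fun x y => M (x.1, x.2.2) (y.1, y.2.2) * (if x.2.1 = y.2.1 then 1 else 0)

/-- Embedding of an operator on (auxiliary space b) ⊗ H into
(aux a) ⊗ (aux b) ⊗ H, identity on aux a. -/
noncomputable def embB (N : ℕ) (M : Matrix (Fin 3 × HIdx N) (Fin 3 × HIdx N) ℂ) :
    Matrix (Fin 3 × Fin 3 × HIdx N) (Fin 3 × Fin 3 × HIdx N) ℂ :=
  Matrix.of fun x y => M (x.2.1, x.2.2) (y.2.1, y.2.2) * (if x.1 = y.1 then 1 else 0)

/-- Embedding of an operator on (aux a) ⊗ (aux b) into (aux a) ⊗ (aux b) ⊗ H. -/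
noncomputable def embP (N : ℕ) (P : Matrix (Fin 3 × Fin 3) (Fin 3 × Fin 3) ℂ) :
    Matrix (Fin 3 × Fin 3 × HIdx N) (Fin 3 × Fin 3 × HIdx N) ℂ :=
  Matrix.of fun x y => P (x.1, x.2.1) (y.1, y.2.1) * (if x.2.2 = y.2.2 then 1 else 0)

/-- Fused transfer matrix `T₂(u) = tr_{ab}(P⁻_{ab} M_b(u) M_a(u/p))`. -/
noncomputable def T2 (N : ℕ) (q p : ℂ) (ζ : Fin N → ℂ) (K : Matrix (Fin 3) (Fin 3) ℂ)
    (u : ℂ) : Matrix (HIdx N) (HIdx N) ℂ :=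
  Matrix.of fun f g => ∑ ia : Fin 3, ∑ ib : Fin 3,
    (embP N (Pm q p) * embB N (Mon N q ζ K u) * embA N (Mon N q ζ K (u / p)))
      (ia, ib, f) (ia, ib, g)

/-!
The Lax operator of a site degenerates to the permutation operator when the spectral parameter hits
the inhomogeneity of that site. The antisymmetric tensors are spanned by the columns of
`antisymBasis`, and fusing two Lax operators on them gives the quantum comatrix, which inverts the
Lax operator up to its quantum determinant. Fusion passes to products over distinct sites because
operators on different sites commute, so `T₁` and `T₂` are traces of a product of Lax operators and
of the product of their comatrices. At `u = ζ_b` the permutation at site `b` merges the product of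
these two traces into a single trace, in which Lax operators and comatrices cancel site by site.
-/

section EntriesCommute

variable {A : Type*} [Semiring A] {i j k l m n : Type*}

/-- Every entry of `X` commutes with every entry of `Y`, as for operators that act on different
tensor factors of the quantum space. -/
def EntriesCommute (X : Matrix i j A) (Y : Matrix k l A) : Prop :=
  ∀ a b c d, Commute (X a b) (Y c d)

namespace EntriesCommute

theorem symm {X : Matrix i j A} {Y : Matrix k l A} (h : EntriesCommute X Y) :
    EntriesCommute Y X :=
  fun a b c d => (h c d a b).symm

theorem transpose_right {X : Matrix i j A} {Y : Matrix k l A} (h : EntriesCommute X Y) :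
    EntriesCommute X Yᵀ :=
  fun a b c d => h a b d c

theorem mul_right [Fintype l] {X : Matrix i j A} {Y : Matrix k l A} {Z : Matrix l m A}
    (hY : EntriesCommute X Y) (hZ : EntriesCommute X Z) : EntriesCommute X (Y * Z) :=
  fun a b c d => Commute.sum_right _ _ _ fun e _ => (hY a b c e).mul_right (hZ a b e d)

theorem mul_left [Fintype j] {X : Matrix i j A} {Y : Matrix j k A} {Z : Matrix l m A}
    (hX : EntriesCommute X Z) (hY : EntriesCommute Y Z) : EntriesCommute (X * Y) Z :=
  (hX.symm.mul_right hY.symm).symm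

theorem one_right [DecidableEq k] (X : Matrix i j A) : EntriesCommute X (1 : Matrix k k A) := by
  intro a b c d
  rw [Matrix.one_apply]
  split_ifs
  exacts [Commute.one_right _, Commute.zero_right _]

theorem list_prod_right [Fintype k] [DecidableEq k] {X : Matrix i j A} {L : List (Matrix k k A)}
    (h : ∀ Y ∈ L, EntriesCommute X Y) : EntriesCommute X L.prod := by
  induction L with
  | nil => exact one_right X
  | cons Y L ih =>
    rw [List.prod_cons]
    exact (h Y List.mem_cons_self).mul_right (ih fun Z hZ => h Z (List.mem_cons_of_mem Y hZ))

theorem map_algebraMap_left {R : Type*} [CommSemiring R] [Algebra R A] (K : Matrix i j R)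
    (X : Matrix k l A) : EntriesCommute (K.map (algebraMap R A)) X :=
  fun _ _ _ _ => Algebra.commutes _ _

theorem transpose_mul [Fintype j] {X : Matrix i j A} {Y : Matrix j k A}
    (h : EntriesCommute X Y) : (X * Y)ᵀ = Yᵀ * Xᵀ := by
  ext a b
  exact Finset.sum_congr rfl fun c _ => h b c c a

theorem trace_mul_comm [Fintype i] [Fintype j] {X : Matrix i j A} {Y : Matrix j i A}
    (h : EntriesCommute X Y) : (X * Y).trace = (Y * X).trace := by
  rw [← Matrix.trace_transpose, h.transpose_mul, Matrix.trace_transpose_mul]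

theorem mul_mul_transpose_eq_smul_one {R : Type*} [CommSemiring R] [Algebra R A] [Fintype n]
    [DecidableEq n] {X₁ X₂ Z₁ Z₂ : Matrix n n A} {d₁ d₂ : R} (h : EntriesCommute Z₁ Z₂)
    (h₁ : X₁ * Z₁ᵀ = d₁ • 1) (h₂ : X₂ * Z₂ᵀ = d₂ • 1) :
    X₁ * X₂ * (Z₁ * Z₂)ᵀ = (d₁ * d₂) • 1 := by
  rw [h.transpose_mul, Matrix.mul_assoc, ← Matrix.mul_assoc X₂, h₂, Matrix.smul_mul,
    Matrix.one_mul, Matrix.mul_smul, h₁, smul_smul, mul_comm]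

end EntriesCommute

theorem map_mul_transpose_map_eq_smul_one {R : Type*} [CommSemiring R] [Algebra R A]
    [Fintype n] [DecidableEq n] {B : Type*} [Semiring B] [Algebra R B] (f : B →ₐ[R] A)
    {X Z : Matrix n n B} {d : R} (h : X * Zᵀ = d • 1) :
    X.map f * (Z.map f)ᵀ = d • 1 := by
  rw [← Matrix.transpose_map, ← Matrix.map_mul, h, Matrix.map_smul f d (map_smul f d),
    Matrix.map_one f (map_zero f) (map_one f)]

end EntriesCommute

section Swap

variable {R A n : Type*} [CommSemiring R] [Semiring A] [Algebra R A] [Fintype n] [DecidableEq n]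

/-- The permutation operator of the auxiliary space `Rⁿ` with a second copy of `Rⁿ` on which the
operator algebra `A` acts through `φ`. -/
def swapOp (φ : Matrix n n R →ₐ[R] A) : Matrix n n A :=
  Matrix.of fun i j => φ (Matrix.single j i 1)

variable (φ : Matrix n n R →ₐ[R] A)

theorem trace_swapOp : (swapOp φ).trace = 1 := by
  simp only [Matrix.trace, Matrix.diag_apply, swapOp, Matrix.of_apply, ← map_sum,
    Matrix.sum_single_one, map_one]

theorem swapOp_apply_mul_swapOp_apply (j k a b : n) :
    swapOp φ j k * swapOp φ a b = if j = b then swapOp φ a k else 0 := by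
  simp only [swapOp, Matrix.of_apply, ← map_mul]
  split_ifs with h
  · rw [h, Matrix.single_mul_single_same, mul_one]
  · rw [Matrix.single_mul_single_of_ne _ _ _ _ h, map_zero]

theorem swapOp_apply_mul_trace_swapOp_mul {W : Matrix n n A} (hW : EntriesCommute (swapOp φ) W)
    (j k : n) : swapOp φ j k * (swapOp φ * W).trace = (W * swapOp φ) j k := by
  simp only [Matrix.trace, Matrix.diag_apply, Matrix.mul_apply, Finset.mul_sum, ← mul_assoc,
    swapOp_apply_mul_swapOp_apply, ite_mul, zero_mul, Finset.sum_ite_eq, Finset.mem_univ, if_true]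
  exact Finset.sum_congr rfl fun a _ => hW a k j a

theorem trace_mul_swapOp_mul_trace_swapOp_mul {W W' : Matrix n n A} {d : R}
    (h : W * W' = d • 1) (hW' : EntriesCommute (swapOp φ) W') :
    (W * swapOp φ).trace * (swapOp φ * W').trace = d • 1 := by
  calc (W * swapOp φ).trace * (swapOp φ * W').trace
      = ∑ k, ∑ j, W k j * (swapOp φ j k * (swapOp φ * W').trace) := by
        rw [Matrix.trace, Finset.sum_mul]
        refine Finset.sum_congr rfl fun k _ => ?_
        rw [Matrix.diag_apply, Matrix.mul_apply, Finset.sum_mul]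
        exact Finset.sum_congr rfl fun j _ => mul_assoc _ _ _
    _ = (W * (W' * swapOp φ)).trace := by
        simp only [swapOp_apply_mul_trace_swapOp_mul φ hW']
        rfl
    _ = d • 1 := by
        rw [← Matrix.mul_assoc, h, Matrix.smul_mul, Matrix.one_mul, Matrix.trace_smul,
          trace_swapOp]

theorem trace_mul_swapOp_mul_mul_trace_transpose {X X' Y Y' : Matrix n n A} {d e : R}
    (hX : X * X'ᵀ = d • 1) (hY : Y * Y'ᵀ = e • 1) (hXY : EntriesCommute X Y)
    (hSY : EntriesCommute (swapOp φ) Y) (hSX' : EntriesCommute (swapOp φ) X')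
    (hSY' : EntriesCommute (swapOp φ) Y') :
    (X * swapOp φ * Y).trace * (X' * (swapOp φ)ᵀ * Y').trace = (d * e) • 1 := by
  have hYX : Y * X * (X'ᵀ * Y'ᵀ) = (d * e) • 1 := by
    rw [Matrix.mul_assoc, ← Matrix.mul_assoc X, hX, Matrix.smul_mul, Matrix.one_mul,
      Matrix.mul_smul, hY, smul_smul]
  have hleft : (X * swapOp φ * Y).trace = (Y * X * swapOp φ).trace := by
    rw [(hXY.mul_left hSY).trace_mul_comm, Matrix.mul_assoc]
  have hright : (X' * (swapOp φ)ᵀ * Y').trace = (swapOp φ * (X'ᵀ * Y'ᵀ)).trace := by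
    rw [← Matrix.mul_assoc, ← Matrix.trace_transpose_mul, hSX'.symm.transpose_right.transpose_mul,
      Matrix.transpose_transpose]
  rw [hleft, hright]
  exact trace_mul_swapOp_mul_trace_swapOp_mul φ hYX
    (hSX'.transpose_right.mul_right hSY'.transpose_right)

end Swap

section Fusion

variable {R A B m n : Type*} [CommSemiring R] [Semiring A] [Algebra R A] [Semiring B] [Algebra R B]

/-- `X_b Y_a` on two auxiliary spaces `a`, `b`, for operator-valued matrices `X`, `Y`; rows and
columns are indexed by `(a, b)`. -/
def pairOp (X Y : Matrix n n A) : Matrix (n × n) (n × n) A :=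
  Matrix.of fun x y => X x.2 y.2 * Y x.1 y.1

/-- `X_b Y_a` preserves the span of the columns of `V` in the two auxiliary spaces, and acts on
these columns by the matrix `Z`. -/
def Fuses [Fintype m] [Fintype n] (V : Matrix (n × n) m R) (X Y : Matrix n n A)
    (Z : Matrix m m A) : Prop :=
  pairOp X Y * V.map (algebraMap R A) = V.map (algebraMap R A) * Z

theorem pairOp_one [DecidableEq n] : pairOp (1 : Matrix n n A) 1 = 1 := by
  ext ⟨a, b⟩ ⟨c, d⟩
  simp only [pairOp, Matrix.of_apply, Matrix.one_apply, Prod.mk.injEq, ite_and]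
  split_ifs <;> simp

theorem pairOp_mul [Fintype n] {X₁ X₂ Y₁ Y₂ : Matrix n n A} (h : EntriesCommute Y₁ X₂) :
    pairOp (X₁ * X₂) (Y₁ * Y₂) = pairOp X₁ Y₁ * pairOp X₂ Y₂ := by
  ext ⟨a, b⟩ ⟨c, d⟩
  simp only [pairOp, Matrix.of_apply, Matrix.mul_apply, Fintype.sum_prod_type_right,
    Finset.sum_mul_sum]
  exact Finset.sum_congr rfl fun i _ => Finset.sum_congr rfl fun j _ =>
    ((h a j i d).symm.mul_mul_mul_comm _ _)

theorem pairOp_map (f : A →ₐ[R] B) (X Y : Matrix n n A) :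
    pairOp (X.map f) (Y.map f) = (pairOp X Y).map f :=
  Matrix.ext fun _ _ => (map_mul f _ _).symm

theorem pairOp_eq_kronecker (X Y : Matrix n n R) : pairOp X Y = Y ⊗ₖ X :=
  Matrix.ext fun _ _ => mul_comm _ _

namespace Fuses

variable [Fintype m] [Fintype n] {V : Matrix (n × n) m R}

theorem one [DecidableEq m] [DecidableEq n] : Fuses V (1 : Matrix n n A) 1 1 := by
  rw [Fuses, pairOp_one, Matrix.one_mul, Matrix.mul_one]

theorem mul {X₁ X₂ Y₁ Y₂ : Matrix n n A} {Z₁ Z₂ : Matrix m m A} (h₁ : Fuses V X₁ Y₁ Z₁)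
    (h₂ : Fuses V X₂ Y₂ Z₂) (h : EntriesCommute Y₁ X₂) :
    Fuses V (X₁ * X₂) (Y₁ * Y₂) (Z₁ * Z₂) := by
  unfold Fuses at *
  rw [pairOp_mul h, Matrix.mul_assoc, h₂, ← Matrix.mul_assoc, h₁, Matrix.mul_assoc]

theorem map {X Y : Matrix n n A} {Z : Matrix m m A} (h : Fuses V X Y Z) (f : A →ₐ[R] B) :
    Fuses V (X.map f) (Y.map f) (Z.map f) := by
  have hV : V.map (algebraMap R B) = (V.map (algebraMap R A)).map f :=
    Matrix.ext fun _ _ => (f.commutes _).symm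
  rw [Fuses, pairOp_map, hV, ← Matrix.map_mul, h, Matrix.map_mul]

theorem of_commute [DecidableEq m] {W : Matrix m (n × n) R} (hWV : W * V = 1) {X Y : Matrix n n R}
    (h : Commute (V * W) (pairOp X Y)) : Fuses V X Y (W * pairOp X Y * V) := by
  have hV : V.map (algebraMap R R) = V := Matrix.ext fun _ _ => rfl
  calc pairOp X Y * V.map (algebraMap R R) = pairOp X Y * (V * W) * V := by
        rw [hV, Matrix.mul_assoc, Matrix.mul_assoc V, hWV, Matrix.mul_one]
    _ = V * W * pairOp X Y * V := by rw [← h.eq]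
    _ = V.map (algebraMap R R) * (W * pairOp X Y * V) := by rw [hV]; simp only [Matrix.mul_assoc]

theorem trace_projector_mul_pairOp [DecidableEq m] {W : Matrix m (n × n) R} (hWV : W * V = 1)
    {X Y : Matrix n n A} {Z : Matrix m m A} (h : Fuses V X Y Z) :
    ((V * W).map (algebraMap R A) * pairOp X Y).trace = Z.trace := by
  have hWV' : W.map (algebraMap R A) * V.map (algebraMap R A) = 1 := by
    rw [← Matrix.map_mul, hWV, Matrix.map_one _ (map_zero _) (map_one _)]
  rw [Matrix.map_mul, Matrix.mul_assoc,
    (EntriesCommute.map_algebraMap_left V _).trace_mul_comm, Matrix.mul_assoc, h,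
    ← Matrix.mul_assoc, hWV', Matrix.one_mul]

end Fuses

end Fusion

section Sites

variable {R ι n : Type*} [CommSemiring R] [Fintype ι] [DecidableEq ι] [Fintype n] [DecidableEq n]

/-- The matrix of the operator `M` on the `c`-th tensor factor of `(Rⁿ)^{⊗ι}`. -/
def siteMatrix (c : ι) (M : Matrix n n R) : Matrix (ι → n) (ι → n) R :=
  Matrix.of fun f g => M (f c) (g c) * if ∀ d, d ≠ c → f d = g d then 1 else 0

theorem siteMatrix_mul_apply (c : ι) (M : Matrix n n R) (Q : Matrix (ι → n) (ι → n) R)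
    (f g : ι → n) :
    (siteMatrix c M * Q) f g = ∑ k, M (f c) k * Q (Function.update f c k) g := by
  rw [Matrix.mul_apply]
  refine (Finset.sum_of_injOn (Function.update f c) (Function.update_injective f c).injOn
    (fun _ _ => Finset.mem_univ _) (fun h _ hh => ?_) fun k _ => ?_).symm
  · have hne : ¬ ∀ d, d ≠ c → f d = h d := fun hd =>
      hh ⟨h c, Finset.mem_coe.mpr (Finset.mem_univ _),
        (Function.eq_update_iff.mpr ⟨rfl, fun d hdc => (hd d hdc).symm⟩).symm⟩
    simp only [siteMatrix, Matrix.of_apply, if_neg hne, mul_zero, zero_mul]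
  · have hd : ∀ d, d ≠ c → f d = Function.update f c k d :=
      fun d hd => (Function.update_of_ne hd k f).symm
    simp only [siteMatrix, Matrix.of_apply, if_pos hd, Function.update_self, mul_one]

theorem siteMatrix_apply (c : ι) (M : Matrix n n R) (f g : ι → n) :
    siteMatrix c M f g =
      ∑ k, M (f c) k * (1 : Matrix (ι → n) (ι → n) R) (Function.update f c k) g := by
  rw [← siteMatrix_mul_apply, Matrix.mul_one]

/-- The embedding of the operators on one factor as operators on the `c`-th tensor factor of
`(Rⁿ)^{⊗ι}`. -/
def site (c : ι) : Matrix n n R →ₐ[R] Matrix (ι → n) (ι → n) R :=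
  AlgHom.ofLinearMap
    { toFun := siteMatrix c
      map_add' := fun M M' => by
        ext
        simp only [siteMatrix, Matrix.of_apply, Matrix.add_apply, add_mul]
      map_smul' := fun r M => by
        ext
        simp only [siteMatrix, Matrix.of_apply, Matrix.smul_apply, smul_mul_assoc,
          RingHom.id_apply] }
    (by
      ext f g
      change siteMatrix c 1 f g = _
      rw [siteMatrix_apply]
      simp only [Matrix.one_apply (i := f c), ite_mul, one_mul, zero_mul, Finset.sum_ite_eq,
        Finset.mem_univ, if_true]
      rw [Function.update_eq_self])
    (fun M M' => by
      ext f g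
      change siteMatrix c (M * M') f g = (siteMatrix c M * siteMatrix c M') f g
      rw [siteMatrix_mul_apply]
      simp only [siteMatrix_apply, Function.update_self, Matrix.mul_apply (M := M) (N := M'),
        Finset.sum_mul, Finset.mul_sum, mul_assoc]
      rw [Finset.sum_comm]
      refine Finset.sum_congr rfl fun k _ => Finset.sum_congr rfl fun l _ => ?_
      rw [Function.update_idem])

theorem site_apply (c : ι) (M : Matrix n n R) (f g : ι → n) :
    site c M f g = M (f c) (g c) * if ∀ d, d ≠ c → f d = g d then 1 else 0 :=
  rfl

theorem commute_site {c c' : ι} (hc : c ≠ c') (M M' : Matrix n n R) :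
    Commute (site c M) (site c' M') := by
  change siteMatrix c M * siteMatrix c' M' = siteMatrix c' M' * siteMatrix c M
  ext f g
  simp only [siteMatrix_mul_apply]
  simp only [siteMatrix_apply, Function.update_of_ne hc, Function.update_of_ne hc.symm,
    Finset.mul_sum]
  rw [Finset.sum_comm]
  refine Finset.sum_congr rfl fun k _ => Finset.sum_congr rfl fun l _ => ?_
  rw [mul_left_comm, Function.update_comm hc]

/-- The ordered product, over the sites in `l`, of the local operator-valued matrices `F c`. -/
def siteProd (F : ι → Matrix n n (Matrix n n R)) (l : List ι) :
    Matrix n n (Matrix (ι → n) (ι → n) R) :=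
  (l.map fun c => (F c).map (site c)).prod

variable (F : ι → Matrix n n (Matrix n n R))

theorem siteProd_cons (c : ι) (l : List ι) :
    siteProd F (c :: l) = (F c).map (site c) * siteProd F l :=
  List.prod_cons

theorem siteProd_append (l l' : List ι) : siteProd F (l ++ l') = siteProd F l * siteProd F l' := by
  rw [siteProd, List.map_append, List.prod_append, siteProd, siteProd]

theorem entriesCommute_site_siteProd {c : ι} {l : List ι} (h : c ∉ l)
    (X : Matrix n n (Matrix n n R)) : EntriesCommute (X.map (site c)) (siteProd F l) := by
  refine EntriesCommute.list_prod_right fun Y hY => ?_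
  obtain ⟨d, hd, rfl⟩ := List.mem_map.mp hY
  exact fun _ _ _ _ => commute_site (ne_of_mem_of_not_mem hd h).symm _ _

theorem entriesCommute_siteProd {l l' : List ι} (h : l.Disjoint l') :
    EntriesCommute (siteProd F l) (siteProd F l') := by
  refine (EntriesCommute.list_prod_right fun Y hY => ?_).symm
  obtain ⟨d, hd, rfl⟩ := List.mem_map.mp hY
  exact (entriesCommute_site_siteProd F (h hd) _).symm

end Sites

section TwistedProd

variable {R ι n : Type*} [CommSemiring R] [Fintype ι] [DecidableEq ι] [Fintype n] [DecidableEq n]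
  {F G Z : ι → Matrix n n (Matrix n n R)} {K K' : Matrix n n R} {l : List ι}

theorem fuses_siteProd {V : Matrix (n × n) n R} (h : ∀ c ∈ l, Fuses V (F c) (G c) (Z c))
    (hl : l.Nodup) : Fuses V (siteProd F l) (siteProd G l) (siteProd Z l) := by
  induction l with
  | nil => exact Fuses.one
  | cons c l ih =>
    rw [List.nodup_cons] at hl
    exact ((h c List.mem_cons_self).map (site c)).mul
      (ih (fun c' hc' => h c' (List.mem_cons_of_mem c hc')) hl.2)
      (entriesCommute_site_siteProd F hl.1 _)

/-- The ordered product of the local operator-valued matrices `F c` over the sites in `l`,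
multiplied by a twist `K` of the auxiliary space. -/
def twistedProd (K : Matrix n n R) (F : ι → Matrix n n (Matrix n n R)) (l : List ι) :
    Matrix n n (Matrix (ι → n) (ι → n) R) :=
  K.map (algebraMap R _) * siteProd F l

theorem fuses_twistedProd {V : Matrix (n × n) n R} (hK : Fuses V K K K')
    (h : ∀ c ∈ l, Fuses V (F c) (G c) (Z c)) (hl : l.Nodup) :
    Fuses V (twistedProd K F l) (twistedProd K G l) (twistedProd K' Z l) :=
  (hK.map (Algebra.ofId R _)).mul (fuses_siteProd h hl) (EntriesCommute.map_algebraMap_left K _)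

theorem siteProd_mul_transpose {d : ι → R} (h : ∀ c ∈ l, F c * (Z c)ᵀ = d c • 1) (hl : l.Nodup) :
    siteProd F l * (siteProd Z l)ᵀ = (l.map d).prod • 1 := by
  induction l with
  | nil => simp [siteProd]
  | cons c l ih =>
    rw [List.nodup_cons] at hl
    exact (entriesCommute_site_siteProd Z hl.1 _).mul_mul_transpose_eq_smul_one
      (map_mul_transpose_map_eq_smul_one (site c) (h c List.mem_cons_self))
      (ih (fun c' hc' => h c' (List.mem_cons_of_mem c hc')) hl.2)

theorem trace_twistedProd_mul_trace_twistedProd {d : ι → R} {e s t : R} {b : ι} (hl : l.Nodup)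
    (hb : b ∈ l) (hK : K * K'ᵀ = e • 1) (hF : ∀ c ≠ b, F c * (Z c)ᵀ = d c • 1)
    (hFb : F b = s • swapOp (AlgHom.id R _)) (hZb : Z b = t • (swapOp (AlgHom.id R _))ᵀ)
    (hd : d b = s * t) :
    (twistedProd K F l).trace * (twistedProd K' Z l).trace = (e * (l.map d).prod) • 1 := by
  obtain ⟨l₁, l₂, rfl⟩ := List.append_of_mem hb
  obtain ⟨hl₁, hbl₂, hdisj⟩ := List.nodup_append'.mp hl
  obtain ⟨hdisj_b, hdisj⟩ := List.disjoint_cons_right.mp hdisj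
  obtain ⟨hb₂, hl₂⟩ := List.nodup_cons.mp hbl₂
  have hcomm {l : List ι} (hl : b ∉ l) (F : ι → Matrix n n (Matrix n n R)) :
      EntriesCommute (swapOp (site b)) (siteProd F l) :=
    entriesCommute_site_siteProd F hl (swapOp (AlgHom.id R _))
  have hsplit {K : Matrix n n R} {F : ι → Matrix n n (Matrix n n R)} :
      twistedProd K F (l₁ ++ b :: l₂) =
        twistedProd K F l₁ * (F b).map (site b) * siteProd F l₂ := by
    simp only [twistedProd, siteProd_append, siteProd_cons, Matrix.mul_assoc]
  have hFb' : (F b).map (site b) = s • swapOp (site b) := by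
    rw [hFb, Matrix.map_smul _ s (map_smul (site b) s)]
    rfl
  have hZb' : (Z b).map (site b) = t • (swapOp (site b))ᵀ := by
    rw [hZb, Matrix.map_smul _ t (map_smul (site b) t)]
    rfl
  have hX : twistedProd K F l₁ * (twistedProd K' Z l₁)ᵀ = (e * (l₁.map d).prod) • 1 :=
    (EntriesCommute.map_algebraMap_left K' _).mul_mul_transpose_eq_smul_one
      (map_mul_transpose_map_eq_smul_one (Algebra.ofId R _) hK)
      (siteProd_mul_transpose (fun c hc => hF c (ne_of_mem_of_not_mem hc hdisj_b)) hl₁)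
  have hY : siteProd F l₂ * (siteProd Z l₂)ᵀ = (l₂.map d).prod • 1 :=
    siteProd_mul_transpose (fun c hc => hF c (ne_of_mem_of_not_mem hc hb₂)) hl₂
  have hswap := trace_mul_swapOp_mul_mul_trace_transpose (site b) hX hY
    ((EntriesCommute.map_algebraMap_left K _).mul_left (entriesCommute_siteProd F hdisj))
    (hcomm hb₂ F)
    ((EntriesCommute.map_algebraMap_left K' _).symm.mul_right (hcomm hdisj_b Z)) (hcomm hb₂ Z)
  rw [hsplit, hsplit, hFb', hZb']
  simp only [Matrix.mul_smul, Matrix.smul_mul, Matrix.trace_smul, smul_mul_smul_comm, hswap,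
    smul_smul, List.map_append, List.map_cons, List.prod_append, List.prod_cons, hd]
  congr 1
  ring

end TwistedProd

section Antisymmetric

variable {k : Type*} [Field k] {r : k}

/-- Columns: a basis `e_{j+1} ⊗ e_{j+2} - r e_{j+2} ⊗ e_{j+1}` of the q-antisymmetric subspace of
`k³ ⊗ k³`, indexed by the missing basis vector `e_j` with indices modulo three. -/
def antisymBasis (r : k) : Matrix (Fin 3 × Fin 3) (Fin 3) k :=
  Matrix.of fun x j =>
    (if x = (j + 1, j + 2) then 1 else 0) - r * if x = (j + 2, j + 1) then 1 else 0

/-- A left inverse of `antisymBasis r`, with rows dual to its columns. -/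
def antisymDual (r : k) : Matrix (Fin 3) (Fin 3 × Fin 3) k :=
  (2⁻¹ : k) • (antisymBasis r⁻¹)ᵀ

theorem antisymDual_mul_antisymBasis (hr : r ≠ 0) (h2 : (2 : k) ≠ 0) :
    antisymDual r * antisymBasis r = 1 := by
  have hdisj : ∀ i j : Fin 3, ¬(j + 1 = i + 2 ∧ j + 2 = i + 1) := by decide
  have hdisj' : ∀ i j : Fin 3, ¬(j + 2 = i + 1 ∧ j + 1 = i + 2) := by decide
  ext i j
  simp only [Matrix.mul_apply, Matrix.one_apply, antisymDual, antisymBasis, Matrix.smul_apply,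
    Matrix.transpose_apply, Matrix.of_apply, smul_eq_mul, mul_sub, sub_mul, mul_ite, ite_mul,
    mul_one, mul_zero, zero_mul, Finset.sum_sub_distrib, Finset.sum_ite_eq', Finset.mem_univ,
    if_true, Prod.mk.injEq, hdisj, hdisj', add_left_inj]
  obtain rfl | hij := eq_or_ne i j
  · simp only [and_self, if_true, if_false]
    field_simp
    norm_num
  · simp only [hij, hij.symm, and_self, if_false, sub_zero]

variable {A : Type*} [Ring A] [Algebra k A] {X Y Z : Matrix (Fin 3) (Fin 3) A}

theorem pairOp_mul_antisymBasis_apply (r : k) (X Y : Matrix (Fin 3) (Fin 3) A) (a b j : Fin 3) :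
    (pairOp X Y * (antisymBasis r).map (algebraMap k A)) (a, b) j =
      X b (j + 2) * Y a (j + 1) - r • (X b (j + 1) * Y a (j + 2)) := by
  simp only [Matrix.mul_apply, pairOp, antisymBasis, Matrix.of_apply, Matrix.map_apply, map_sub,
    apply_ite (algebraMap k A), map_one, map_zero, mul_sub, mul_ite, mul_one, mul_zero,
    Finset.sum_sub_distrib, Finset.sum_ite_eq', Finset.mem_univ, if_true,
    Algebra.smul_def, Algebra.commutes]

theorem antisymBasis_mul_apply (r : k) (Z : Matrix (Fin 3) (Fin 3) A) (a b j : Fin 3) :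
    ((antisymBasis r).map (algebraMap k A) * Z) (a, b) j =
      if b = a + 1 then Z (a + 2) j else if b = a + 2 then -(r • Z (a + 1) j) else 0 := by
  rw [Algebra.smul_def]
  fin_cases a <;> fin_cases b <;>
    simp [Matrix.mul_apply, Fin.sum_univ_three, antisymBasis]

theorem fuses_antisymBasis_iff :
    Fuses (antisymBasis r) X Y Z ↔ ∀ a b j,
      X b (j + 2) * Y a (j + 1) - r • (X b (j + 1) * Y a (j + 2)) =
        if b = a + 1 then Z (a + 2) j else if b = a + 2 then -(r • Z (a + 1) j) else 0 := by
  simp only [Fuses, ← Matrix.ext_iff, Prod.forall, pairOp_mul_antisymBasis_apply,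
    antisymBasis_mul_apply]

theorem Fuses.eq_transpose_adjugate {K Z : Matrix (Fin 3) (Fin 3) k} (hr : r ^ 2 ≠ 1)
    (h : Fuses (antisymBasis r) K K Z) : Z = K.adjugateᵀ := by
  rw [fuses_antisymBasis_iff] at h
  have hminor (i j : Fin 3) : K (i + 2) (j + 2) * K (i + 1) (j + 1) -
      r * (K (i + 2) (j + 1) * K (i + 1) (j + 2)) = Z i j := by
    have h' := h (i + 1) (i + 2) j
    fin_cases i <;> simpa using h'
  have hminor' (i j : Fin 3) : K (i + 1) (j + 2) * K (i + 2) (j + 1) -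
      r * (K (i + 1) (j + 1) * K (i + 2) (j + 2)) = -(r * Z i j) := by
    have h' := h (i + 2) (i + 1) j
    fin_cases i <;> simpa using h'
  have hanti (i j : Fin 3) : K (i + 2) (j + 1) * K (i + 1) (j + 2) = 0 := by
    have h' : (1 - r ^ 2) * (K (i + 2) (j + 1) * K (i + 1) (j + 2)) = 0 := by
      linear_combination r * hminor i j + hminor' i j
    exact (mul_eq_zero.mp h').resolve_left (sub_ne_zero.mpr hr.symm)
  have hZ (i j : Fin 3) : Z i j =
      K (i + 1) (j + 1) * K (i + 2) (j + 2) - K (i + 1) (j + 2) * K (i + 2) (j + 1) := by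
    linear_combination -hminor i j + (1 - r) * hanti i j
  ext i j
  rw [hZ, Matrix.adjugate_fin_three]
  fin_cases i <;> fin_cases j <;> simp <;> ring

end Antisymmetric

section LaxOperators

set_option maxHeartbeats 1000000 in
-- 81 matrix entries are checked one by one
theorem RpM_apply (q u : ℂ) (i k j l : Fin 3) :
    RpM q u (i, k) (j, l) =
      if i = j ∧ k = l then
        (if i = k then u ^ 3 * q - (u ^ 3 * q)⁻¹ else u ^ 3 - (u ^ 3)⁻¹)
      else if i = l ∧ k = j then (q - q⁻¹) * (if k = i + 1 then u else u⁻¹)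
      else 0 := by
  simp only [RpM, Eb, Fin.sum_univ_three, Matrix.add_apply, Matrix.smul_apply, smul_eq_mul,
    Matrix.kroneckerMap_apply, Matrix.single_apply, Fin.isValue, Fin.reduceEq, Fin.reduceLT,
    ↓reduceIte, Matrix.zero_apply]
  fin_cases i <;> fin_cases k <;> fin_cases j <;> fin_cases l <;> simp [_root_.zpow_neg]

theorem RpM_apply_add (q u : ℂ) (i k j l s : Fin 3) :
    RpM q u (i + s, k + s) (j + s, l + s) = RpM q u (i, k) (j, l) := by
  simp only [RpM_apply, add_left_inj, add_right_comm _ s]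

theorem antisymBasis_mul_antisymDual {p : ℂ} (hp : p ≠ 0) (hp2 : (p ^ 3) ^ 2 ≠ 1) :
    antisymBasis p * antisymDual p = Pm (p ^ 3) p := by
  have h : 2 * ((p ^ 3)⁻¹ - p ^ 3) ≠ 0 := by
    refine mul_ne_zero two_ne_zero fun h0 => hp2 ?_
    field_simp at h0
    linear_combination -h0
  rw [Pm, eq_inv_smul_iff₀ h]
  ext ⟨a, b⟩ ⟨c, d⟩
  rw [Matrix.smul_apply, RpM_apply]
  fin_cases a <;> fin_cases b <;> fin_cases c <;> fin_cases d <;>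
    simp [Matrix.mul_apply, Fin.sum_univ_three, antisymDual, antisymBasis] <;>
    field_simp <;> ring

/-- The Lax operator: the R-matrix as a matrix over the auxiliary space with entries in the
operators of a single site. -/
noncomputable def laxOp (q u : ℂ) : Matrix (Fin 3) (Fin 3) (Matrix (Fin 3) (Fin 3) ℂ) :=
  Matrix.of fun i j => Matrix.of fun k l => RpM q u (i, k) (j, l)

/-- The inverse of `laxOp q u` up to a scalar: the R-matrix `R₂₁(u⁻¹)` as a matrix over the
auxiliary space. -/
noncomputable def laxOpInv (q u : ℂ) : Matrix (Fin 3) (Fin 3) (Matrix (Fin 3) (Fin 3) ℂ) :=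
  Matrix.of fun i j => Matrix.of fun k l => RpM q u⁻¹ (k, i) (l, j)

/-- The quantum comatrix of the Lax operator: the matrix of its quantum minors of size two. -/
noncomputable def laxComatrix (q u : ℂ) : Matrix (Fin 3) (Fin 3) (Matrix (Fin 3) (Fin 3) ℂ) :=
  (q ^ 2 / u ^ 3 - u ^ 3 / q ^ 2) • (laxOpInv q u)ᵀ

/-- The quantum determinant of the Lax operator. -/
noncomputable def laxQDet (q u : ℂ) : ℂ :=
  (q ^ 2 / u ^ 3 - u ^ 3 / q ^ 2) * ((u ^ 3 * q - (u ^ 3 * q)⁻¹) * (q / u ^ 3 - u ^ 3 / q))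

theorem laxOp_add (q u : ℂ) (i j s : Fin 3) :
    laxOp q u (i + s) (j + s) =
      Matrix.reindexAlgEquiv ℂ ℂ (Equiv.addRight s) (laxOp q u i j) := by
  ext k l
  obtain ⟨k, rfl⟩ := (Equiv.addRight s).surjective k
  obtain ⟨l, rfl⟩ := (Equiv.addRight s).surjective l
  simp only [Matrix.coe_reindexAlgEquiv, Matrix.reindex_apply, Matrix.submatrix_apply,
    Equiv.symm_apply_apply]
  exact RpM_apply_add q u i k j l s

theorem laxOpInv_add (q u : ℂ) (i j s : Fin 3) :
    laxOpInv q u (i + s) (j + s) =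
      Matrix.reindexAlgEquiv ℂ ℂ (Equiv.addRight s) (laxOpInv q u i j) := by
  ext k l
  obtain ⟨k, rfl⟩ := (Equiv.addRight s).surjective k
  obtain ⟨l, rfl⟩ := (Equiv.addRight s).surjective l
  simp only [Matrix.coe_reindexAlgEquiv, Matrix.reindex_apply, Matrix.submatrix_apply,
    Equiv.symm_apply_apply]
  exact RpM_apply_add q u⁻¹ k i l j s

theorem laxOp_one (q : ℂ) : laxOp q 1 = (q - q⁻¹) • swapOp (AlgHom.id ℂ _) := by
  ext i j k l
  simp only [laxOp, swapOp, Matrix.of_apply, RpM_apply, Matrix.smul_apply, AlgHom.id_apply,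
    Matrix.single_apply, smul_eq_mul]
  grind

theorem laxOpInv_one (q : ℂ) : laxOpInv q 1 = (q - q⁻¹) • swapOp (AlgHom.id ℂ _) := by
  ext i j k l
  simp only [laxOpInv, swapOp, Matrix.of_apply, RpM_apply, Matrix.smul_apply, AlgHom.id_apply,
    Matrix.single_apply, smul_eq_mul]
  grind

theorem laxOp_mul_laxOpInv {q u : ℂ} (hq : q ≠ 0) (hu : u ≠ 0) :
    laxOp q u * laxOpInv q u =
      ((u ^ 3 * q - (u ^ 3 * q)⁻¹) * (q / u ^ 3 - u ^ 3 / q)) •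
        (1 : Matrix (Fin 3) (Fin 3) (Matrix (Fin 3) (Fin 3) ℂ)) := by
  ext i j k l
  simp only [Matrix.mul_apply, Fin.sum_univ_three, Matrix.add_apply, laxOp, laxOpInv,
    Matrix.of_apply, RpM_apply, Matrix.smul_apply, smul_eq_mul, Matrix.one_apply]
  fin_cases i <;> fin_cases j <;> fin_cases k <;> fin_cases l <;>
    simp only [Fin.isValue, Fin.zero_eta, Fin.mk_one, Fin.reduceFinMk, Fin.reduceAdd, Fin.reduceEq,
      Matrix.one_apply, Matrix.zero_apply, and_self, and_true, and_false, if_true, if_false,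
      mul_zero, zero_mul, add_zero, zero_add] <;>
    field_simp <;> ring1

theorem laxOp_mul_laxComatrix_transpose {q u : ℂ} (hq : q ≠ 0) (hu : u ≠ 0) :
    laxOp q u * (laxComatrix q u)ᵀ =
      laxQDet q u • (1 : Matrix (Fin 3) (Fin 3) (Matrix (Fin 3) (Fin 3) ℂ)) := by
  rw [laxComatrix, Matrix.transpose_smul, Matrix.transpose_transpose, Matrix.mul_smul,
    laxOp_mul_laxOpInv hq hu, smul_smul, laxQDet]

theorem laxComatrix_one (q : ℂ) :
    laxComatrix q 1 = ((q ^ 2 - (q ^ 2)⁻¹) * (q - q⁻¹)) • (swapOp (AlgHom.id ℂ _))ᵀ := by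
  rw [laxComatrix, laxOpInv_one, Matrix.transpose_smul, smul_smul, one_pow, div_one, one_div]

theorem laxQDet_one (q : ℂ) :
    laxQDet q 1 = (q - q⁻¹) * ((q ^ 2 - (q ^ 2)⁻¹) * (q - q⁻¹)) := by
  rw [laxQDet]
  ring

theorem laxQDet_div {q x y : ℂ} (hq : q ≠ 0) (hx : x ≠ 0) (hy : y ≠ 0) :
    laxQDet q (x / y) =
      (x ^ 3 * q / y ^ 3 - y ^ 3 / (q * x ^ 3)) * (x ^ 3 / (q * y ^ 3) - q * y ^ 3 / x ^ 3) *
        (x ^ 3 / (q ^ 2 * y ^ 3) - q ^ 2 * y ^ 3 / x ^ 3) := by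
  rw [laxQDet]
  field_simp
  ring

theorem laxComatrix_add (q u : ℂ) (i j s : Fin 3) :
    laxComatrix q u (i + s) (j + s) =
      Matrix.reindexAlgEquiv ℂ ℂ (Equiv.addRight s) (laxComatrix q u i j) := by
  simp only [laxComatrix, Matrix.smul_apply, Matrix.transpose_apply, laxOpInv_add, map_smul]

set_option maxHeartbeats 1000000 in
-- 81 matrix entries are checked one by one
theorem laxOp_mul_laxOp_sub_smul_zero {r u : ℂ} (hr : r ≠ 0) (hu : u ≠ 0) (a b : Fin 3) :
    laxOp (r ^ 3) (u / r) b 2 * laxOp (r ^ 3) (u / r / r) a 1 -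
        r • (laxOp (r ^ 3) (u / r) b 1 * laxOp (r ^ 3) (u / r / r) a 2) =
      if b = a + 1 then laxComatrix (r ^ 3) u (a + 2) 0
      else if b = a + 2 then -(r • laxComatrix (r ^ 3) u (a + 1) 0) else 0 := by
  ext k n
  simp only [Matrix.mul_apply, Fin.sum_univ_three, Matrix.sub_apply, laxOp, laxOpInv, laxComatrix,
    Matrix.of_apply, RpM_apply, Matrix.smul_apply, smul_eq_mul, Matrix.transpose_apply,
    apply_ite (fun M : Matrix (Fin 3) (Fin 3) ℂ => M k n), Matrix.neg_apply, Matrix.zero_apply]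
  fin_cases a <;> fin_cases b <;> fin_cases k <;> fin_cases n <;>
    simp only [Fin.isValue, Fin.zero_eta, Fin.mk_one, Fin.reduceFinMk, Fin.reduceAdd, Fin.reduceEq,
      and_self, and_true, and_false, if_true, if_false, mul_zero, zero_mul, add_zero,
      zero_add, sub_zero, zero_sub, neg_zero] <;>
    field_simp <;> ring1

-- The cyclic symmetry of the principal gradation reduces the claim to a single column.
theorem fuses_laxOp {r u : ℂ} (hr : r ≠ 0) (hu : u ≠ 0) :
    Fuses (antisymBasis r) (laxOp (r ^ 3) (u / r)) (laxOp (r ^ 3) (u / r / r))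
      (laxComatrix (r ^ 3) u) := by
  rw [fuses_antisymBasis_iff]
  intro a b j
  obtain ⟨a, rfl⟩ := (Equiv.addRight j).surjective a
  obtain ⟨b, rfl⟩ := (Equiv.addRight j).surjective b
  have h := congrArg (Matrix.reindexAlgEquiv ℂ ℂ (Equiv.addRight j))
    (laxOp_mul_laxOp_sub_smul_zero hr hu a b)
  simpa only [map_sub, map_mul, map_smul, map_neg, map_zero, ← laxOp_add, ← laxComatrix_add,
    apply_ite (Matrix.reindexAlgEquiv ℂ ℂ (Equiv.addRight j)), zero_add, Equiv.coe_addRight,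
    add_right_comm _ j, add_comm j, add_left_inj] using h

end LaxOperators

section TransferMatrices

variable {N : ℕ} (q p : ℂ) (ζ : Fin N → ℂ) (K : Matrix (Fin 3) (Fin 3) ℂ) (u : ℂ)

/-- The monodromy matrix `Mon N q ζ K u` as a matrix over the auxiliary space with entries in the
operators on the quantum space. -/
noncomputable def monodromy : Matrix (Fin 3) (Fin 3) (Matrix (HIdx N) (HIdx N) ℂ) :=
  twistedProd K (fun c => laxOp q (u / ζ c)) (List.finRange N).reverse

theorem Kaux_eq_comp : Kaux N K = Matrix.compRingEquiv (Fin 3) (HIdx N) ℂ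
    (K.map (algebraMap ℂ (Matrix (HIdx N) (HIdx N) ℂ))) := by
  ext ⟨i, f⟩ ⟨j, g⟩
  simp [Kaux, Matrix.algebraMap_matrix_apply]

theorem Raux_eq_comp (c : Fin N) : Raux N q u c =
    Matrix.compRingEquiv (Fin 3) (HIdx N) ℂ ((laxOp q u).map (site c)) := by
  ext ⟨i, f⟩ ⟨j, g⟩
  simp [Raux, site_apply, laxOp]

theorem Mon_eq_comp_monodromy :
    Mon N q ζ K u = Matrix.compRingEquiv (Fin 3) (HIdx N) ℂ (monodromy q ζ K u) := by
  simp only [Mon, Kaux_eq_comp, Raux_eq_comp, monodromy, twistedProd, siteProd, map_mul,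
    map_list_prod, List.map_map, Function.comp_def]

theorem T1_eq_trace : T1 N q ζ K u = (monodromy q ζ K u).trace := by
  ext f g
  simp [T1, Mon_eq_comp_monodromy, Matrix.trace, Matrix.sum_apply]

theorem embP_mul_apply (P : Matrix (Fin 3 × Fin 3) (Fin 3 × Fin 3) ℂ)
    (Q : Matrix (Fin 3 × Fin 3 × HIdx N) (Fin 3 × Fin 3 × HIdx N) ℂ) (x : Fin 3 × Fin 3)
    (f : HIdx N) (z : Fin 3 × Fin 3 × HIdx N) :
    (embP N P * Q) (x.1, x.2, f) z = ∑ y, P x y * Q (y.1, y.2, f) z := by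
  simp [Matrix.mul_apply, embP, Fintype.sum_prod_type]

theorem embB_mul_embA_apply (X Y : Matrix (Fin 3) (Fin 3) (Matrix (HIdx N) (HIdx N) ℂ))
    (x y : Fin 3 × Fin 3) (f g : HIdx N) :
    (embB N (Matrix.compRingEquiv (Fin 3) (HIdx N) ℂ X) *
      embA N (Matrix.compRingEquiv (Fin 3) (HIdx N) ℂ Y)) (x.1, x.2, f) (y.1, y.2, g) =
      pairOp X Y x y f g := by
  simp [Matrix.mul_apply, embA, embB, pairOp, Fintype.sum_prod_type]

theorem T2_eq_trace :
    T2 N q p ζ K u =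
      ((Pm q p).map (algebraMap ℂ _) *
        pairOp (monodromy q ζ K u) (monodromy q ζ K (u / p))).trace := by
  ext f g
  rw [T2, Matrix.of_apply, ← Fintype.sum_prod_type', Mon_eq_comp_monodromy,
    Mon_eq_comp_monodromy, Matrix.trace, Matrix.sum_apply]
  refine Finset.sum_congr rfl fun x _ => ?_
  rw [Matrix.mul_assoc, embP_mul_apply, Matrix.diag_apply, Matrix.mul_apply, Matrix.sum_apply]
  refine Finset.sum_congr rfl fun y _ => ?_
  rw [embB_mul_embA_apply, Matrix.map_apply, ← Algebra.smul_def, Matrix.smul_apply, smul_eq_mul]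

variable {q p ζ K u}

theorem fuses_antisymBasis_adjugate (hp : p ≠ 0) (hp2 : (p ^ 3) ^ 2 ≠ 1)
    (hK : Commute (Pm (p ^ 3) p) (K ⊗ₖ K)) :
    Fuses (antisymBasis p) K K K.adjugateᵀ := by
  have hp1 : p ^ 2 ≠ 1 := fun h => hp2 (by rw [pow_right_comm, h, one_pow])
  rw [← antisymBasis_mul_antisymDual hp hp2, ← pairOp_eq_kronecker] at hK
  have hfuses := Fuses.of_commute (antisymDual_mul_antisymBasis hp two_ne_zero) hK
  rwa [hfuses.eq_transpose_adjugate hp1] at hfuses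

theorem T2_div_eq_trace (hp : p ≠ 0) (hp2 : (p ^ 3) ^ 2 ≠ 1) (hζ : ∀ c, ζ c ≠ 0)
    (hK : Commute (Pm (p ^ 3) p) (K ⊗ₖ K)) (hu : u ≠ 0) :
    T2 N (p ^ 3) p ζ K (u / p) =
      (twistedProd K.adjugateᵀ (fun c => laxComatrix (p ^ 3) (u / ζ c))
        (List.finRange N).reverse).trace := by
  rw [T2_eq_trace, monodromy, monodromy, ← antisymBasis_mul_antisymDual hp hp2]
  refine Fuses.trace_projector_mul_pairOp (antisymDual_mul_antisymBasis hp two_ne_zero)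
    (fuses_twistedProd (fuses_antisymBasis_adjugate hp hp2 hK) (fun c _ => ?_)
      (List.nodup_reverse.mpr (List.nodup_finRange N)))
  rw [div_right_comm (u / p), div_right_comm u]
  exact fuses_laxOp hp (div_ne_zero hu (hζ c))

end TransferMatrices

/-- `T₁(ζ_b) T₂(ζ_b/p)` equals the quantum determinant (an
explicit central scalar) times the identity. -/
theorem quantum_determinant_identity (N : ℕ) (hN : 1 ≤ N) (q p : ℂ)
    (hq : q ≠ 0) (hq2 : q ^ 2 ≠ 1) (hp : p ^ 3 = q)
    (ζ : Fin N → ℂ) (hζ : ∀ b, ζ b ≠ 0) (K : Matrix (Fin 3) (Fin 3) ℂ)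
    (hK : ∀ w : ℂ, w ≠ 0 → RpM q w * (K ⊗ₖ K) = (K ⊗ₖ K) * RpM q w)
    (b : Fin N) :
    T1 N q ζ K (ζ b) * T2 N q p ζ K (ζ b / p)
      = (K.det * ∏ c : Fin N,
          ((ζ b ^ 3 * q / ζ c ^ 3 - ζ c ^ 3 / (q * ζ b ^ 3))
            * (ζ b ^ 3 / (q * ζ c ^ 3) - q * ζ c ^ 3 / ζ b ^ 3)
            * (ζ b ^ 3 / (q ^ 2 * ζ c ^ 3) - q ^ 2 * ζ c ^ 3 / ζ b ^ 3)))
        • (1 : Matrix (HIdx N) (HIdx N) ℂ) := by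
  subst hp
  have hp0 : p ≠ 0 := ne_zero_pow three_ne_zero hq
  have hPm : Commute (Pm (p ^ 3) p) (K ⊗ₖ K) :=
    Commute.smul_left (hK p⁻¹ (inv_ne_zero hp0)) _
  have hKadj : K * (K.adjugateᵀ)ᵀ = K.det • 1 := by
    rw [Matrix.transpose_transpose, Matrix.mul_adjugate]
  have hprod : ((List.finRange N).reverse.map fun c => laxQDet (p ^ 3) (ζ b / ζ c)).prod =
      ∏ c, laxQDet (p ^ 3) (ζ b / ζ c) := by
    rw [Fin.prod_univ_def, List.map_reverse, List.prod_reverse]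
  rw [T1_eq_trace, T2_div_eq_trace hp0 hq2 hζ hPm (hζ b), monodromy,
    trace_twistedProd_mul_trace_twistedProd (List.nodup_reverse.mpr (List.nodup_finRange N))
      (List.mem_reverse.mpr (List.mem_finRange b)) hKadj
      (fun c _ => laxOp_mul_laxComatrix_transpose hq (div_ne_zero (hζ b) (hζ c)))
      (by rw [div_self (hζ b)]; exact laxOp_one _)
      (by rw [div_self (hζ b)]; exact laxComatrix_one _)
      (by rw [div_self (hζ b)]; exact laxQDet_one _), hprod]
  simp only [laxQDet_div hq (hζ b) (hζ _)]
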